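/- Let f : 𝔻 → ℂ be an injective holomorphic map with f(0) = 0 and |f′(0)| ≤ 4. Then |f(ζ)| ≤ 4|ζ|/(1−|ζ|)² for all ζ ∈ 𝔻. -/

import Mathlib

/-!
The growth bound is the integral of the Koebe distortion bound `|f'(z)| ≤ |f'(0)| (1 + |z|) / (1 - |z|)³`
along a radius. The distortion bound is itself the integral of
`(1 - |z|²) |f''(z)| ≤ (4 + 2 |z|) |f'(z)|`, which is Bieberbach's inequality `|a₂| ≤ 2` applied to the
Koebe transform of `f` at `z`.

Bieberbach's inequality is derived from an area argument with a weight, which takes the place of the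
square-root transform and of Green's formula. Write the normalized function as `f z = z exp (L z)` and
measure area by `|w| ^ (-2 - 2α)` with `0 < α < 1/2`. The image of the annulus `r < |z| ≤ s` lies outside
a disc of radius `r - C r²`, so its weighted area is at most `(π / α) (r - C r²) ^ (-2α)`. By change of
variables and the mean value property it is at least
`(π / α) (r ^ (-2α) - s ^ (-2α)) + π (1 - α) |a₂|² (s ^ (2 - 2α) - r ^ (2 - 2α))`. The singular terms
cancel up to `O(r ^ (1 - 2α))`, which tends to `0` exactly because `α < 1/2`. Letting `r → 0` and
`s → 1` gives `α (1 - α) |a₂|² ≤ 1`, and `α → 1/2` gives `|a₂| ≤ 2`.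
-/

open Set Filter Topology MeasureTheory Complex Real

/-! ### Derivatives of univalent functions -/

/-- The derivative of an injective holomorphic function does not vanish: the inverse function is
continuous by the open mapping theorem and holomorphic off the isolated critical value, hence
holomorphic there too, and the chain rule forbids a zero of the derivative. -/
theorem deriv_ne_zero_of_injOn {U : Set ℂ} (hU : IsOpen U) {f : ℂ → ℂ}
    (hf : DifferentiableOn ℂ f U) (hinj : InjOn f U) {c : ℂ} (hc : c ∈ U) : deriv f c ≠ 0 := by
  intro h0
  have han : ∀ z ∈ U, AnalyticAt ℂ f z := fun z hz => hf.analyticAt (hU.mem_nhds hz)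
  have hnc : ∀ z ∈ U, ¬ ∀ᶠ w in 𝓝 z, f w = f z := by
    intro z hz h
    have h1 : ∀ᶠ w in 𝓝[≠] z, w = z := by
      filter_upwards [h.filter_mono nhdsWithin_le_nhds,
        mem_nhdsWithin_of_mem_nhds (hU.mem_nhds hz)] with w hw hwU
      exact hinj hwU hz hw
    obtain ⟨w, hw, hw'⟩ := (h1.and self_mem_nhdsWithin).exists
    exact hw' hw
  have hopen : ∀ z ∈ U, 𝓝 (f z) ≤ map f (𝓝 z) := fun z hz =>
    (han z hz).eventually_constant_or_nhds_le_map_nhds.resolve_left (hnc z hz)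
  have hd : ∀ᶠ z in 𝓝[≠] c, deriv f z ≠ 0 := by
    refine (han c hc).deriv.eventually_eq_zero_or_eventually_ne_zero.resolve_left fun h => ?_
    obtain ⟨ε, hε, hb⟩ := Metric.eventually_nhds_iff_ball.1 (h.and (hU.mem_nhds hc))
    refine hnc c hc ?_
    filter_upwards [Metric.ball_mem_nhds c hε] with w hw
    exact (convex_ball c ε).is_const_of_fderivWithin_eq_zero (𝕜 := ℂ) (f := f)
      (hf.mono fun z hz => (hb z hz).2)
      (fun z hz => by
        rw [fderivWithin_of_isOpen Metric.isOpen_ball hz]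
        ext
        simpa using (hb z hz).1) hw (Metric.mem_ball_self hε)
  -- The inverse of `f` is continuous, hence has a removable singularity at `f c`.
  set g := Function.invFunOn f U with hg
  have hgf : ∀ z ∈ U, g (f z) = z := fun z hz => hinj.leftInvOn_invFunOn hz
  have hgc : ∀ z ∈ U, ContinuousAt g (f z) := by
    intro z hz
    rw [ContinuousAt, hgf z hz]
    intro N hN
    have : f '' (N ∩ U) ∈ 𝓝 (f z) :=
      hopen z hz (mem_map.2
        (mem_of_superset (inter_mem hN (hU.mem_nhds hz)) (subset_preimage_image _ _)))
    refine mem_map.2 (mem_of_superset this ?_)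
    rintro _ ⟨x, ⟨hx, hxU⟩, rfl⟩
    simpa [hgf x hxU] using hx
  have hgd : ∀ᶠ w in 𝓝[≠] (f c), DifferentiableAt ℂ g w := by
    rw [eventually_nhdsWithin_iff] at hd ⊢
    refine hopen c hc (mem_map.2 ?_)
    filter_upwards [hd, hU.mem_nhds hc] with z hz hzU hne
    have hzc : z ≠ c := fun h => hne (by simp [h])
    refine (HasDerivAt.of_local_left_inverse (f := f) (f' := deriv f z) (hgc z hzU) ?_ (hz hzc) ?_).differentiableAt
    · rw [hgf z hzU]; exact (han z hzU).differentiableAt.hasDerivAt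
    · refine hopen z hzU (mem_map.2 ?_)
      filter_upwards [hU.mem_nhds hzU] with x hx
      simp [hgf x hx]
  have hga := (analyticAt_of_differentiable_on_punctured_nhds_of_continuousAt hgd
    (hgc c hc)).differentiableAt.hasDerivAt
  have h1 := hga.comp c (han c hc).differentiableAt.hasDerivAt
  have h2 : HasDerivAt (g ∘ f) 1 c := (hasDerivAt_id c).congr_of_eventuallyEq (by
    filter_upwards [hU.mem_nhds hc] with x hx
    simp [hgf x hx])
  have := h1.unique h2
  simp [h0] at this

/-! ### Integrals over annuli and circles -/

/-- Integration in polar coordinates over a half-open annulus, together with the integrability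
of the radial integrand. -/
theorem integral_annulus {a b : ℝ} (ha : 0 < a) (hab : a ≤ b) {G : ℂ → ℝ}
    (hG : ContinuousOn G {z | a ≤ ‖z‖ ∧ ‖z‖ ≤ b}) :
    IntervalIntegrable (fun t => t * (2 * π * circleAverage G 0 t)) volume a b ∧
    ∫ z in {z : ℂ | a < ‖z‖ ∧ ‖z‖ ≤ b}, G z = ∫ t in a..b, t * (2 * π * circleAverage G 0 t) := by
  have hS : MeasurableSet {z : ℂ | a < ‖z‖ ∧ ‖z‖ ≤ b} :=
    (measurableSet_lt measurable_const measurable_norm).inter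
      (measurableSet_le measurable_norm measurable_const)
  set F : ℝ × ℝ → ℝ := fun p => p.1 * G (Complex.polarCoord.symm p) with hF
  have hFc : ContinuousOn F (Icc a b ×ˢ Icc (-π) π) := by
    refine continuousOn_fst.mul (hG.comp (Continuous.continuousOn ?_) ?_)
    · rw [show (Complex.polarCoord.symm : ℝ × ℝ → ℂ) = _ from funext Complex.polarCoord_symm_apply]
      fun_prop
    · rintro p ⟨hp, -⟩
      have : 0 < p.1 := ha.trans_le hp.1
      simpa [norm_polarCoord_symm, abs_of_pos this, -Complex.polarCoord_symm_apply] using hp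
  have hFi : IntegrableOn F (Ioc a b ×ˢ Ioo (-π) π) (volume.prod volume) :=
    (hFc.integrableOn_compact (isCompact_Icc.prod isCompact_Icc)).mono_set
      (prod_mono Ioc_subset_Icc_self Ioo_subset_Icc_self)
  have hin : ∀ t : ℝ, ∫ θ in Ioo (-π) π, F (t, θ) = t * (2 * π * circleAverage G 0 t) := by
    intro t
    simp only [hF]
    rw [integral_const_mul, circleAverage_eq_integral_add (-π),
      intervalIntegral.integral_comp_add_right (fun θ ↦ G (circleMap 0 t θ)), smul_eq_mul,
      mul_inv_cancel_left₀ (by positivity), ← integral_Ioc_eq_integral_Ioo,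
      ← intervalIntegral.integral_of_le (by linarith [pi_pos])]
    congr 1
    rw [show 0 + -π = -π by ring, show 2 * π + -π = π by ring]
    congr 1
    ext θ
    simp [circleMap, Complex.exp_mul_I]
  constructor
  · rw [intervalIntegrable_iff_integrableOn_Ioc_of_le hab]
    have h := hFi
    rw [IntegrableOn, ← Measure.prod_restrict] at h
    have := h.integral_prod_left
    simp only [hin] at this
    exact this
  · rw [← integral_indicator hS, ← Complex.integral_comp_polarCoord_symm]
    have h1 : ∀ p ∈ polarCoord.target, p.1 • ({z : ℂ | a < ‖z‖ ∧ ‖z‖ ≤ b}.indicator G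
        (Complex.polarCoord.symm p)) = (Ioc a b ×ˢ univ).indicator F p := by
      rintro p hp
      have hp0 : 0 < p.1 := hp.1
      by_cases h : p.1 ∈ Ioc a b
      · rw [indicator_of_mem, indicator_of_mem]
        · simp [hF]
        · exact ⟨h, trivial⟩
        · simpa [norm_polarCoord_symm, abs_of_pos hp0, -Complex.polarCoord_symm_apply] using h
      · rw [indicator_of_notMem, indicator_of_notMem]
        · simp
        · exact fun h' => h h'.1
        · simpa [norm_polarCoord_symm, abs_of_pos hp0, -Complex.polarCoord_symm_apply] using h
    rw [setIntegral_congr_fun polarCoord.open_target.measurableSet h1,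
      setIntegral_indicator (measurableSet_Ioc.prod MeasurableSet.univ)]
    have h2 : polarCoord.target ∩ Ioc a b ×ˢ univ = Ioc a b ×ˢ Ioo (-π) π := by
      ext p
      simp only [polarCoord_target, mem_inter_iff, mem_prod, mem_Ioi, mem_univ, mem_Ioc, mem_Ioo]
      constructor
      · rintro ⟨⟨h1, h2⟩, h3, -⟩; exact ⟨h3, h2⟩
      · rintro ⟨h3, h2⟩; exact ⟨⟨ha.trans h3.1, h2⟩, h3, trivial⟩
    rw [h2, Measure.volume_eq_prod, setIntegral_prod _ hFi, intervalIntegral.integral_of_le hab]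
    simp only [hin]

/-- The first two terms of Parseval's inequality for `q z = 1 + c z + ⋯` on a circle. With
`w = 1 + c z`, the bound `2 Re (q * conj w) - |w|² ≤ |q|²` has a left side which on the circle is
the real part of a holomorphic function, so the mean value property applies. -/
theorem one_add_le_circleAverage_norm_sq {q : ℂ → ℂ} (hq : DifferentiableOn ℂ q (Metric.ball 0 1)) (h0 : q 0 = 1)
    {t : ℝ} (ht : 0 < t) (ht1 : t < 1) :
    1 + ‖deriv q 0‖ ^ 2 * t ^ 2 ≤ circleAverage (fun z => ‖q z‖ ^ 2) 0 t := by
  set c := deriv q 0 with hc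
  -- On `‖z‖ = t` one has `t² / z = conj z`, so `Re (H z) = 2 Re (q z * conj w) - ‖w‖²`, `w = 1 + c z`.
  set H : ℂ → ℂ := fun z => 2 * q z + 2 * t ^ 2 * ((starRingEnd ℂ) c * dslope q 0 z) -
    (1 + ‖c‖ ^ 2 * t ^ 2 : ℝ) with hH
  have hsub : Metric.closedBall (0 : ℂ) t ⊆ Metric.ball 0 1 := Metric.closedBall_subset_ball ht1
  have hds : DifferentiableOn ℂ (dslope q 0) (Metric.ball 0 1) :=
    (differentiableOn_dslope (Metric.ball_mem_nhds 0 one_pos)).2 hq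
  have hHd : DifferentiableOn ℂ H (Metric.ball 0 1) := by
    simp only [hH]
    fun_prop
  have hHm : circleAverage H 0 t = H 0 := by
    refine DiffContOnCl.circleAverage ?_
    rw [abs_of_pos ht]
    refine DifferentiableOn.diffContOnCl ?_
    rw [closure_ball _ ht.ne']
    exact hHd.mono hsub
  have hsph : Metric.sphere (0 : ℂ) |t| ⊆ Metric.ball 0 1 := by
    rw [abs_of_pos ht]; exact Metric.sphere_subset_closedBall.trans hsub
  have hHi : CircleIntegrable H 0 t := (hHd.continuousOn.mono hsph).circleIntegrable'
  have hre : circleAverage (fun z => (H z).re) 0 t = 1 + ‖c‖ ^ 2 * t ^ 2 := by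
    have := Complex.reCLM.circleAverage_comp_comm hHi
    rw [hHm] at this
    rw [show (fun z => (H z).re) = Complex.reCLM ∘ H from rfl, this]
    simp only [hH, h0, dslope_same, ← hc, ← Complex.normSq_eq_conj_mul_self,
      Complex.normSq_eq_norm_sq, reCLM_apply]
    norm_cast
    simp
    ring
  rw [← hre]
  refine circleAverage_mono ?_ ?_ ?_
  · exact ((Complex.continuous_re.comp_continuousOn hHd.continuousOn).mono hsph).circleIntegrable'
  · exact ((hq.continuousOn.norm.pow 2).mono hsph).circleIntegrable'
  · intro z hz
    have hz' : ‖z‖ = t := by simpa [abs_of_pos ht] using hz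
    have hz0 : z ≠ 0 := by rintro rfl; simp at hz'; exact ht.ne hz'
    have hds : dslope q 0 z = (q z - 1) / z := by
      rw [dslope_of_ne _ hz0, slope_def_field, h0, sub_zero]
    have ht2 : (t : ℂ) ^ 2 = z * (starRingEnd ℂ) z := by
      rw [Complex.mul_conj, Complex.normSq_eq_norm_sq, hz']; push_cast; rfl
    have key : H z = 2 * q z + 2 * ((starRingEnd ℂ) (c * z)) * (q z - 1) -
        (1 + ‖c‖ ^ 2 * t ^ 2 : ℝ) := by
      simp only [hH, hds, ht2, map_mul]
      field_simp
    have hn : ‖c‖ ^ 2 * t ^ 2 = ‖c * z‖ ^ 2 := by rw [norm_mul, hz']; ring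
    show (H z).re ≤ ‖q z‖ ^ 2
    rw [key, hn]
    generalize c * z = w
    generalize q z = v
    simp only [← Complex.normSq_eq_norm_sq, Complex.normSq_apply]
    simp
    nlinarith [sq_nonneg (v.re - 1 - w.re), sq_nonneg (v.im - w.im)]

/-! ### The weighted area inequality -/

theorem abs_det_toSpanSingleton (a : ℂ) : |((ContinuousLinearMap.toSpanSingleton ℂ a).restrictScalars ℝ).det| = ‖a‖ ^ 2 := by
  simp [ContinuousLinearMap.det, LinearMap.det_restrictScalars,
      Algebra.norm_complex_eq, Complex.normSq_eq_norm_sq]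

theorem hasDerivAt_mul_cexp {L : ℂ → ℂ} (hL : DifferentiableOn ℂ L (Metric.ball 0 1)) {z : ℂ}
    (hz : z ∈ Metric.ball (0 : ℂ) 1) :
    HasDerivAt (fun z => z * cexp (L z)) ((1 + z * deriv L z) * cexp (L z)) z := by
  have h1 := (hL.differentiableAt (Metric.isOpen_ball.mem_nhds hz)).hasDerivAt
  exact ((hasDerivAt_id z).mul h1.cexp).congr_deriv (by simp only [id]; ring)

/-- The integral of `‖w‖ ^ (-2 - p)` over `ρ < ‖w‖ ≤ M` is bounded uniformly in `M` by the
integral over the whole exterior of the disc of radius `ρ`. -/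
theorem integral_annulus_rpow_le {p ρ M : ℝ} (hρ : 0 < ρ) (hM : ρ ≤ M) (hp : 0 < p) :
    ∫ w in {w : ℂ | ρ < ‖w‖ ∧ ‖w‖ ≤ M}, ‖w‖ ^ (-2 - p) ≤ 2 * π * (ρ ^ (-p) / p) := by
  have hc : ContinuousOn (fun w : ℂ => ‖w‖ ^ (-2 - p)) {z | ρ ≤ ‖z‖ ∧ ‖z‖ ≤ M} := by
    refine continuous_norm.continuousOn.rpow_const fun w hw => Or.inl ?_
    exact (hρ.trans_le hw.1).ne'
  rw [(integral_annulus hρ hM hc).2]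
  have h : ∀ t ∈ uIcc ρ M, t * (2 * π * circleAverage (fun w : ℂ => ‖w‖ ^ (-2 - p)) 0 t)
      = 2 * π * t ^ (-1 - p) := by
    intro t ht
    rw [uIcc_of_le hM] at ht
    have ht0 : 0 < t := hρ.trans_le ht.1
    rw [circleAverage_const_on_circle (a := t ^ (-2 - p))]
    · rw [show -1 - p = 1 + (-2 - p) by ring, Real.rpow_add ht0, Real.rpow_one]; ring
    · intro x hx
      have : ‖x‖ = t := by simpa [abs_of_pos ht0] using hx
      simp [this]
  rw [intervalIntegral.integral_congr h, intervalIntegral.integral_const_mul, integral_rpow]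
  · refine mul_le_mul_of_nonneg_left ?_ (by positivity)
    rw [show -1 - p + 1 = -p by ring, div_neg, ← neg_div]
    gcongr
    have := Real.rpow_nonneg (hρ.le.trans hM) (-p)
    linarith
  · right
    refine ⟨by linarith, ?_⟩
    rw [uIcc_of_le hM]
    exact fun h => hρ.not_ge h.1

/-- Weighted area inequality for the univalent map `f z = z * exp (L z)`, with weight
`‖w‖ ^ (-2 - 2α)`. If `f` maps `r < ‖z‖ < 1` into the exterior of the disc of radius `ρ`, the weighted
area of the image of `r < ‖z‖ ≤ s` is at most that of the exterior. By change of variables it is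
also the integral of `‖z‖ ^ (-2 - 2α) * ‖q z‖ ^ 2` with `q z = (1 + z L' z) * exp (-α L z)`, where
`q z = 1 + (1 - α) L'(0) z + ⋯`. -/
theorem weighted_area_inequality {L : ℂ → ℂ} (hL : DifferentiableOn ℂ L (Metric.ball 0 1)) (h0 : L 0 = 0)
    (hinj : InjOn (fun z => z * cexp (L z)) (Metric.ball 0 1)) {α : ℝ} (hα : 0 < α) (hα1 : α < 1 / 2)
    {r s ρ : ℝ} (hr : 0 < r) (hrs : r ≤ s) (hs : s < 1) (hρ : 0 < ρ)
    (hlow : ∀ z : ℂ, r < ‖z‖ → ‖z‖ < 1 → ρ < ‖z * cexp (L z)‖) :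
    (r ^ (-(2 * α)) - s ^ (-(2 * α))) / (2 * α) +
      (1 - α) ^ 2 * ‖deriv L 0‖ ^ 2 * ((s ^ (2 - 2 * α) - r ^ (2 - 2 * α)) / (2 - 2 * α)) ≤
    ρ ^ (-(2 * α)) / (2 * α) := by
  set f : ℂ → ℂ := fun z => z * cexp (L z) with hf
  set q : ℂ → ℂ := fun z => (1 + z * deriv L z) * cexp (-α * L z) with hq
  have hL' : DifferentiableOn ℂ (deriv L) (Metric.ball 0 1) := hL.deriv Metric.isOpen_ball
  have hqd : DifferentiableOn ℂ q (Metric.ball 0 1) := by simp only [hq]; fun_prop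
  have hq0 : q 0 = 1 := by simp [hq, h0]
  have hb0 : Metric.ball (0 : ℂ) 1 ∈ 𝓝 0 := Metric.ball_mem_nhds 0 one_pos
  have hq1 : deriv q 0 = (1 - α) * deriv L 0 := by
    have h1 := (hL.differentiableAt hb0).hasDerivAt
    have h2 := (hL'.differentiableAt hb0).hasDerivAt
    have := (((hasDerivAt_id (0 : ℂ)).mul h2).const_add 1).mul ((h1.const_mul (-(α : ℂ))).cexp)
    have h3 := this.deriv
    simp only [h0] at h3
    rw [show deriv q 0 = _ from h3]
    simp
    ring
  have hd : ‖deriv q 0‖ ^ 2 = (1 - α) ^ 2 * ‖deriv L 0‖ ^ 2 := by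
    rw [hq1, norm_mul, mul_pow]
    congr 2
    rw [← Complex.ofReal_one, ← Complex.ofReal_sub, Complex.norm_real, Real.norm_eq_abs,
      abs_of_pos (by linarith)]
  rw [← hd]
  set d := ‖deriv q 0‖ ^ 2
  set S : Set ℂ := {z | r < ‖z‖ ∧ ‖z‖ ≤ s} with hS
  have hSm : MeasurableSet S := (measurableSet_lt measurable_const measurable_norm).inter
      (measurableSet_le measurable_norm measurable_const)
  have hSb : S ⊆ Metric.ball 0 1 := fun z hz => by
    simpa using hz.2.trans_lt hs
  have hcb : Metric.closedBall (0 : ℂ) s ⊆ Metric.ball 0 1 := Metric.closedBall_subset_ball hs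
  have hfc : ContinuousOn f (Metric.closedBall 0 s) := fun z hz =>
    (hasDerivAt_mul_cexp hL (hcb hz)).continuousAt.continuousWithinAt
  obtain ⟨M, hM⟩ := (isCompact_closedBall (0 : ℂ) s).exists_bound_of_continuousOn hfc
  set T : Set ℂ := {w | ρ < ‖w‖ ∧ ‖w‖ ≤ max M ρ} with hT
  have hTm : MeasurableSet T := (measurableSet_lt measurable_const measurable_norm).inter
      (measurableSet_le measurable_norm measurable_const)
  have hsub : f '' S ⊆ T := by
    rintro _ ⟨z, hz, rfl⟩
    exact ⟨hlow z hz.1 (hz.2.trans_lt hs), (hM z (by simpa using hz.2)).trans (le_max_left _ _)⟩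
  set W : ℂ → ℝ := fun w => ‖w‖ ^ (-2 - 2 * α) with hW
  have hWi : IntegrableOn W T := by
    have hK : IsCompact {w : ℂ | ρ ≤ ‖w‖ ∧ ‖w‖ ≤ max M ρ} := by
      refine (isCompact_closedBall (0 : ℂ) (max M ρ)).of_isClosed_subset ?_ ?_
      · exact (isClosed_le continuous_const continuous_norm).inter
          (isClosed_le continuous_norm continuous_const)
      · intro z hz; simpa using hz.2
    refine (ContinuousOn.integrableOn_compact hK ?_).mono_set fun z hz => ⟨hz.1.le, hz.2⟩
    refine continuous_norm.continuousOn.rpow_const fun w hw => Or.inl ?_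
    exact (hρ.trans_le hw.1).ne'
  have hup : ∫ w in f '' S, W w ≤ 2 * π * (ρ ^ (-(2 * α)) / (2 * α)) := by
    refine le_trans ?_ (integral_annulus_rpow_le hρ (le_max_right M ρ) (by positivity : 0 < 2 * α))
    exact setIntegral_mono_set hWi (Eventually.of_forall fun w => by positivity)
      (LE.le.eventuallyLE hsub)
  set G : ℂ → ℝ := fun z => ‖z‖ ^ (-2 - 2 * α) * ‖q z‖ ^ 2 with hG
  have hcv : ∫ w in f '' S, W w = ∫ z in S, G z := by
    rw [integral_image_eq_integral_abs_det_fderiv_smul volume hSm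
      (f' := fun z => (ContinuousLinearMap.toSpanSingleton ℂ
        ((1 + z * deriv L z) * cexp (L z))).restrictScalars ℝ)
      (fun z hz => ((hasDerivAt_mul_cexp hL (hSb hz)).hasFDerivAt.restrictScalars ℝ).hasFDerivWithinAt)
      (hinj.mono hSb)]
    refine setIntegral_congr_fun hSm fun z hz => ?_
    have hz0 : 0 < ‖z‖ := hr.trans hz.1
    simp only [abs_det_toSpanSingleton, hW, hG, hq, smul_eq_mul, norm_mul, Complex.norm_exp, mul_pow]
    rw [Real.mul_rpow hz0.le (Real.exp_pos _).le, ← Real.exp_mul, ← Real.exp_nat_mul,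
      ← Real.exp_nat_mul]
    have : (-(α : ℂ) * L z).re = -α * (L z).re := by simp
    rw [this, show ((2 : ℕ) : ℝ) * (-α * (L z).re) =
      ((2 : ℕ) : ℝ) * (L z).re + (L z).re * (-2 - 2 * α) by push_cast; ring, Real.exp_add]
    ring
  have hGc : ContinuousOn G {z | r ≤ ‖z‖ ∧ ‖z‖ ≤ s} := by
    refine ContinuousOn.mul ?_ ?_
    · refine continuous_norm.continuousOn.rpow_const fun w hw => Or.inl ?_
      exact (hr.trans_le hw.1).ne'
    · exact (hqd.continuousOn.norm.pow 2).mono fun z hz => by simpa using hz.2.trans_lt hs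
  obtain ⟨hi, he⟩ := integral_annulus hr hrs hGc
  have hn0 : (0 : ℝ) ∉ uIcc r s := by
    rw [uIcc_of_le hrs]; exact fun h => hr.not_ge h.1
  have i1 : IntervalIntegrable (fun t : ℝ => t ^ (-1 - 2 * α)) volume r s :=
    intervalIntegral.intervalIntegrable_rpow (Or.inr hn0)
  have i2 : IntervalIntegrable (fun t : ℝ => t ^ (1 - 2 * α)) volume r s :=
    intervalIntegral.intervalIntegrable_rpow (Or.inr hn0)
  have hlo : ∫ t in r..s, 2 * π * (t ^ (-1 - 2 * α) + d * t ^ (1 - 2 * α)) ≤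
      ∫ t in r..s, t * (2 * π * circleAverage G 0 t) := by
    refine intervalIntegral.integral_mono_on hrs ((i1.add (i2.const_mul d)).const_mul _) hi ?_
    intro t ht
    have ht0 : 0 < t := hr.trans_le ht.1
    have h1 : circleAverage G 0 t = t ^ (-2 - 2 * α) * circleAverage (fun z => ‖q z‖ ^ 2) 0 t := by
      rw [← smul_eq_mul, ← circleAverage_fun_smul]
      refine circleAverage_congr_sphere fun z hz => ?_
      have : ‖z‖ = t := by simpa [abs_of_pos ht0] using hz
      simp [hG, this]
    have h2 := one_add_le_circleAverage_norm_sq hqd hq0 ht0 (ht.2.trans_lt hs)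
    rw [h1]
    calc 2 * π * (t ^ (-1 - 2 * α) + d * t ^ (1 - 2 * α))
        = t * (2 * π * (t ^ (-2 - 2 * α) * (1 + d * t ^ 2))) := by
          rw [show -1 - 2 * α = 1 + (-2 - 2 * α) by ring,
            show 1 - 2 * α = 1 + (-2 - 2 * α) + 2 by ring, Real.rpow_add ht0, Real.rpow_add ht0,
            Real.rpow_add ht0, Real.rpow_one, Real.rpow_two]
          ring
      _ ≤ _ := by gcongr
  have hlo2 : ∫ t in r..s, 2 * π * (t ^ (-1 - 2 * α) + d * t ^ (1 - 2 * α)) =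
      2 * π * ((r ^ (-(2 * α)) - s ^ (-(2 * α))) / (2 * α) +
      d * ((s ^ (2 - 2 * α) - r ^ (2 - 2 * α)) / (2 - 2 * α))) := by
    rw [intervalIntegral.integral_const_mul, intervalIntegral.integral_add i1 (i2.const_mul d),
      intervalIntegral.integral_const_mul, integral_rpow (Or.inr ⟨by linarith, hn0⟩),
      integral_rpow (Or.inr ⟨by linarith, hn0⟩),
      show -1 - 2 * α + 1 = -(2 * α) by ring, show 1 - 2 * α + 1 = 2 - 2 * α by ring]
    rw [div_neg, ← neg_div, neg_sub]
  have hfin := hlo.trans (he.symm.le.trans (hcv.symm.le.trans hup))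
  rw [hlo2] at hfin
  exact le_of_mul_le_mul_left hfin (by positivity)

/-! ### Bieberbach's inequality -/

/-- Outside the disc of small radius `r`, a univalent `z * exp (L z)` stays outside a disc of
radius `r - C r²`. Near the origin this is the expansion of the function; elsewhere injectivity
keeps the values away from `0`, because a neighbourhood of `0` is already covered. -/
theorem eventually_lower_bound {L : ℂ → ℂ} (hL : DifferentiableOn ℂ L (Metric.ball 0 1)) (h0 : L 0 = 0)
    (hinj : InjOn (fun z => z * cexp (L z)) (Metric.ball 0 1)) :
    ∃ C > 0, ∀ᶠ r in 𝓝[>] (0 : ℝ), ∀ z : ℂ, r < ‖z‖ → ‖z‖ < 1 →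
      r - C * r ^ 2 < ‖z * cexp (L z)‖ := by
  have hb0 : Metric.ball (0 : ℂ) 1 ∈ 𝓝 0 := Metric.ball_mem_nhds 0 one_pos
  obtain ⟨C, hC, hO⟩ := ((hL.differentiableAt hb0).isBigO_sub).exists_pos
  have hO := hO.bound
  simp only [h0, sub_zero] at hO
  obtain ⟨δ₀, hδ₀, hb⟩ := Metric.eventually_nhds_iff_ball.1 hO
  -- The radius `1 / (2C)` keeps `x ↦ x - C x²` increasing on `[0, δ]`.
  set δ := min (min δ₀ 1) (1 / (2 * C)) with hδ
  have hδpos : 0 < δ := by positivity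
  have hlow : ∀ z : ℂ, ‖z‖ < δ → ‖z‖ - C * ‖z‖ ^ 2 ≤ ‖z * cexp (L z)‖ := by
    intro z hz
    have h1 := hb z (by
      simpa using hz.trans_le ((min_le_left _ _).trans (min_le_left _ _)))
    have h2 := Real.add_one_le_exp (L z).re
    have h3 := neg_le_of_abs_le (Complex.abs_re_le_norm (L z))
    rw [norm_mul, Complex.norm_exp]
    nlinarith [norm_nonneg z]
  have hnhds : (fun z => z * cexp (L z)) '' Metric.ball 0 δ ∈ 𝓝 (0 : ℂ) := by
    have hd := hasDerivAt_mul_cexp hL (Metric.mem_ball_self one_pos)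
    have han : AnalyticAt ℂ (fun z => z * cexp (L z)) 0 := by
      have := hL.analyticAt hb0
      fun_prop
    have hs := han.hasStrictDerivAt
    have hm := hs.map_nhds_eq (by rw [hd.deriv]; simp)
    simp only [zero_mul] at hm
    rw [← hm]
    exact image_mem_map (Metric.ball_mem_nhds 0 hδpos)
  obtain ⟨ρ₀, hρ₀, hsub⟩ := Metric.mem_nhds_iff.1 hnhds
  refine ⟨C, hC, ?_⟩
  filter_upwards [Ioo_mem_nhdsGT hρ₀] with r hr z hrz hz1
  by_contra! hcon
  have hlt : ‖z * cexp (L z)‖ < ρ₀ := by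
    have : 0 ≤ C * r ^ 2 := by positivity
    linarith [hr.2]
  obtain ⟨z', hz', he⟩ := hsub (by simpa using hlt : z * cexp (L z) ∈ Metric.ball (0 : ℂ) ρ₀)
  have hz'δ : ‖z'‖ < δ := by simpa using hz'
  have heq : z' = z := hinj (by
    simpa using hz'δ.trans_le ((min_le_left _ _).trans (min_le_right _ _))) (by simpa using hz1) he
  rw [heq] at hz'δ
  have h1 := hlow z hz'δ
  have h2 : ‖z‖ < 1 / (2 * C) := hz'δ.trans_le (min_le_right _ _)
  rw [lt_div_iff₀ (by positivity)] at h2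
  have h3 : C * (‖z‖ + r) < 1 := by nlinarith
  nlinarith [mul_pos (sub_pos.2 hrz) (sub_pos.2 h3)]

theorem rpow_sub_sq_le {α C r : ℝ} (hα : 0 < α) (hα1 : α < 1 / 2) (hC : 0 < C) (hr : 0 < r)
    (hCr : C * r ≤ 1 / 2) :
    (r - C * r ^ 2) ^ (-(2 * α)) ≤ r ^ (-(2 * α)) + 2 * C * r ^ (1 - 2 * α) := by
  have h1 : (1 - C * r) ^ (-(2 * α)) ≤ 1 + 2 * (C * r) := by
    calc (1 - C * r) ^ (-(2 * α)) ≤ (1 - C * r) ^ (-1 : ℝ) :=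
          Real.rpow_le_rpow_of_exponent_ge (by linarith) (by nlinarith) (by linarith)
      _ ≤ _ := by
          rw [Real.rpow_neg_one, inv_le_iff_one_le_mul₀ (by linarith)]
          nlinarith [mul_pos hC hr]
  rw [show r - C * r ^ 2 = r * (1 - C * r) by ring, Real.mul_rpow hr.le (by linarith),
    show 1 - 2 * α = -(2 * α) + 1 by ring, Real.rpow_add hr, Real.rpow_one]
  have := mul_le_mul_of_nonneg_left h1 (Real.rpow_nonneg hr.le (-(2 * α)))
  linarith

/-- Bieberbach's inequality `|a₂| ≤ 2` for `z * exp (L z) = z + a₂ z² + ⋯`, where `a₂ = L'(0)`. -/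
theorem norm_deriv_log_le_two {L : ℂ → ℂ} (hL : DifferentiableOn ℂ L (Metric.ball 0 1)) (h0 : L 0 = 0)
    (hinj : InjOn (fun z => z * cexp (L z)) (Metric.ball 0 1)) : ‖deriv L 0‖ ≤ 2 := by
  obtain ⟨C, hC, hlow⟩ := eventually_lower_bound hL h0 hinj
  set c := ‖deriv L 0‖ with hc
  have key : ∀ α : ℝ, 0 < α → α < 1 / 2 → α * (1 - α) * c ^ 2 ≤ 1 := by
    intro α hα hα1
    -- The inner radius tends to `0`, then the outer radius to `1`.
    have hs : ∀ s : ℝ, 0 < s → s < 1 →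
        (1 - α) ^ 2 * c ^ 2 * (s ^ (2 - 2 * α) / (2 - 2 * α)) ≤ s ^ (-(2 * α)) / (2 * α) := by
      intro s hs hs1
      have hev : ∀ᶠ r in 𝓝[>] (0 : ℝ), (1 - α) ^ 2 * c ^ 2 *
          ((s ^ (2 - 2 * α) - r ^ (2 - 2 * α)) / (2 - 2 * α)) ≤
          s ^ (-(2 * α)) / (2 * α) + 2 * C * r ^ (1 - 2 * α) / (2 * α) := by
        filter_upwards [hlow, Ioo_mem_nhdsGT hs,
          Ioo_mem_nhdsGT (by positivity : 0 < 1 / (2 * C))] with r hr hrs hrC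
        have hr0 := hrs.1
        have hCr : C * r ≤ 1 / 2 := by
          have := hrC.2
          rw [lt_div_iff₀ (by positivity)] at this
          linarith
        have h1 := weighted_area_inequality hL h0 hinj hα hα1 hr0 hrs.2.le hs1 (ρ := r - C * r ^ 2)
          (by nlinarith) hr
        have h2 := div_le_div_of_nonneg_right (rpow_sub_sq_le hα hα1 hC hr0 hCr)
          (by positivity : 0 ≤ 2 * α)
        rw [add_div] at h2
        rw [sub_div] at h1
        linarith
      have t1 : Tendsto (fun r : ℝ => r ^ (2 - 2 * α)) (𝓝[>] 0) (𝓝 0) := by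
        have := (Real.continuousAt_rpow_const 0 (2 - 2 * α) (Or.inr (by linarith))).tendsto
        rw [Real.zero_rpow (by linarith)] at this
        exact this.mono_left nhdsWithin_le_nhds
      have t2 : Tendsto (fun r : ℝ => r ^ (1 - 2 * α)) (𝓝[>] 0) (𝓝 0) := by
        have := (Real.continuousAt_rpow_const 0 (1 - 2 * α) (Or.inr (by linarith))).tendsto
        rw [Real.zero_rpow (by linarith)] at this
        exact this.mono_left nhdsWithin_le_nhds
      have := le_of_tendsto_of_tendsto
        (((t1.const_sub (s ^ (2 - 2 * α))).div_const (2 - 2 * α)).const_mul ((1 - α) ^ 2 * c ^ 2))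
        (((t2.const_mul (2 * C)).div_const (2 * α)).const_add (s ^ (-(2 * α)) / (2 * α))) hev
      simpa using this
    have hev : ∀ᶠ s in 𝓝[<] (1 : ℝ), (1 - α) ^ 2 * c ^ 2 * (s ^ (2 - 2 * α) / (2 - 2 * α)) ≤
        s ^ (-(2 * α)) / (2 * α) := by
      filter_upwards [Ioo_mem_nhdsLT one_pos] with s h using hs s h.1 h.2
    have t : ∀ p : ℝ, Tendsto (fun s : ℝ => s ^ p) (𝓝[<] 1) (𝓝 1) := by
      intro p
      have := (Real.continuousAt_rpow_const 1 p (Or.inl one_ne_zero)).tendsto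
      rw [Real.one_rpow] at this
      exact this.mono_left nhdsWithin_le_nhds
    have := le_of_tendsto_of_tendsto
        (((t (2 - 2 * α)).div_const (2 - 2 * α)).const_mul ((1 - α) ^ 2 * c ^ 2))
        ((t (-(2 * α))).div_const (2 * α)) hev
    have h2 : (1 - α) ^ 2 * c ^ 2 * (1 / (2 - 2 * α)) = (1 - α) * c ^ 2 / 2 := by
      field_simp [show 2 - 2 * α ≠ 0 by linarith]
    rw [h2, le_div_iff₀ (by positivity)] at this
    linarith
  have t : Tendsto (fun α : ℝ => α * (1 - α) * c ^ 2) (𝓝[<] (1 / 2)) (𝓝 (1 / 2 * (1 - 1 / 2) * c ^ 2)) :=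
    Continuous.tendsto' (by fun_prop) _ _ rfl |>.mono_left nhdsWithin_le_nhds
  have hev : ∀ᶠ α in 𝓝[<] (1 / 2 : ℝ), α * (1 - α) * c ^ 2 ≤ 1 := by
    filter_upwards [Ioo_mem_nhdsLT (by norm_num : (0 : ℝ) < 1 / 2)] with s h using key s h.1 h.2
  have := le_of_tendsto t hev
  nlinarith [norm_nonneg (deriv L 0)]

/-- Bieberbach's inequality for a univalent function without normalization, obtained by writing
`f z = f 0 + f'(0) * z * exp (L z)` on the disc. -/
theorem norm_second_deriv_zero_le {f : ℂ → ℂ} (hf : DifferentiableOn ℂ f (Metric.ball 0 1))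
    (hinj : InjOn f (Metric.ball 0 1)) : ‖deriv (deriv f) 0‖ ≤ 4 * ‖deriv f 0‖ := by
  have hb0 : Metric.ball (0 : ℂ) 1 ∈ 𝓝 0 := Metric.ball_mem_nhds 0 one_pos
  have hm0 : (0 : ℂ) ∈ Metric.ball (0 : ℂ) 1 := Metric.mem_ball_self one_pos
  set a := deriv f 0 with ha
  have ha0 : a ≠ 0 := deriv_ne_zero_of_injOn Metric.isOpen_ball hf hinj hm0
  set e : ℂ → ℂ := fun z => dslope f 0 z / a with he
  have hed : DifferentiableOn ℂ e (Metric.ball 0 1) :=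
    ((differentiableOn_dslope hb0).2 hf).div_const a
  have he0 : e 0 = 1 := by simp [he, ← ha, ha0]
  have hfe : ∀ z, f z = f 0 + a * (z * e z) := by
    intro z
    have := sub_smul_dslope f 0 z
    simp only [sub_zero, smul_eq_mul] at this
    simp only [he]
    field_simp
    rw [this]; ring
  have hene : ∀ z ∈ Metric.ball (0 : ℂ) 1, e z ≠ 0 := by
    intro z hz h
    have h1 : z = 0 := hinj hz hm0 (by rw [hfe z, h]; simp)
    rw [h1, he0] at h
    exact one_ne_zero h
  have hldd : DifferentiableOn ℂ (fun z => deriv e z / e z) (Metric.ball 0 1) :=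
    (hed.deriv Metric.isOpen_ball).div hed hene
  obtain ⟨L₀, hL₀⟩ := hldd.isExactOn_ball
  set L : ℂ → ℂ := fun z => L₀ z - L₀ 0 with hL
  have hLd : ∀ z ∈ Metric.ball (0 : ℂ) 1, HasDerivAt L (deriv e z / e z) z := fun z hz =>
    (hL₀ z hz).sub_const _
  have hLdiff : DifferentiableOn ℂ L (Metric.ball 0 1) := fun z hz =>
    (hLd z hz).differentiableAt.differentiableWithinAt
  have hL0 : L 0 = 0 := by simp [hL]
  have hexp : ∀ z ∈ Metric.ball (0 : ℂ) 1, cexp (L z) = e z := by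
    intro z hz
    -- The quotient `e / exp L` has zero derivative.
    have hd : ∀ x ∈ Metric.ball (0 : ℂ) 1, HasDerivAt (fun z => e z * cexp (-L z)) 0 x := by
      intro x hx
      have h1 := (hed.differentiableAt (Metric.isOpen_ball.mem_nhds hx)).hasDerivAt
      refine (h1.mul (hLd x hx).neg.cexp).congr_deriv ?_
      have := hene x hx
      field_simp
      ring
    have := (convex_ball (0 : ℂ) 1).is_const_of_fderivWithin_eq_zero (𝕜 := ℂ)
      (f := fun z => e z * cexp (-L z))
      (fun x hx => (hd x hx).differentiableAt.differentiableWithinAt)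
      (fun x hx => by
        rw [fderivWithin_of_isOpen Metric.isOpen_ball hx]
        ext
        simpa using (hd x hx).deriv) hz hm0
    simp only [he0, hL0, neg_zero, Complex.exp_zero, mul_one, Complex.exp_neg] at this
    exact ((mul_inv_eq_one₀ (Complex.exp_ne_zero _)).1 this).symm
  have hLinj : InjOn (fun z => z * cexp (L z)) (Metric.ball 0 1) := by
    intro x hx y hy hxy
    simp only [hexp x hx, hexp y hy] at hxy
    exact hinj hx hy (by rw [hfe x, hfe y, hxy])
  have hB := norm_deriv_log_le_two hLdiff hL0 hLinj
  have hf' : deriv f =ᶠ[𝓝 0] fun z => a * ((1 + z * deriv L z) * cexp (L z)) := by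
    filter_upwards [hb0] with z hz
    refine HasDerivAt.deriv ?_
    refine (((hasDerivAt_mul_cexp hLdiff hz).const_mul a).const_add (f 0)).congr_of_eventuallyEq ?_
    filter_upwards [Metric.isOpen_ball.mem_nhds hz] with x hx
    rw [hfe x, hexp x hx]
  have hf'' : deriv (deriv f) 0 = a * (2 * deriv L 0) := by
    rw [hf'.deriv_eq]
    have h1 := (hLdiff.differentiableAt hb0).hasDerivAt
    have h2 := ((hLdiff.deriv Metric.isOpen_ball).differentiableAt hb0).hasDerivAt
    have := ((((hasDerivAt_id (0 : ℂ)).mul h2).const_add 1).mul h1.cexp).const_mul a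
    refine (this.congr_deriv ?_).deriv
    simp only [hL0, Complex.exp_zero, id, Pi.mul_apply]
    ring
  rw [hf'', norm_mul, norm_mul]
  simp only [Complex.norm_ofNat]
  nlinarith [norm_nonneg a]

/-! ### Distortion and growth -/

/-- Bieberbach's inequality at an arbitrary point `z` of the disc, obtained from the one at `0` for
the Koebe transform `ζ ↦ f ((ζ + z) / (1 + conj z * ζ))`. -/
theorem norm_second_deriv_le {f : ℂ → ℂ} (hf : DifferentiableOn ℂ f (Metric.ball 0 1))
    (hinj : InjOn f (Metric.ball 0 1)) {z : ℂ} (hz : ‖z‖ < 1) :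
    ‖deriv (deriv f) z‖ * (1 - ‖z‖ ^ 2) ≤ ‖deriv f z‖ * (4 + 2 * ‖z‖) := by
  set zb := (starRingEnd ℂ) z with hzb
  set φ : ℂ → ℂ := fun ζ => (ζ + z) / (1 + zb * ζ) with hφ
  have hzz : zb * z = ((‖z‖ ^ 2 : ℝ) : ℂ) := by
    rw [hzb, ← Complex.normSq_eq_conj_mul_self, Complex.normSq_eq_norm_sq]
  have hzbn : ‖zb‖ = ‖z‖ := Complex.norm_conj z
  have hpos : 0 < 1 - ‖z‖ ^ 2 := by nlinarith [norm_nonneg z]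
  have hne : ∀ ζ ∈ Metric.ball (0 : ℂ) 1, 1 + zb * ζ ≠ 0 := by
    intro ζ hζ h
    have h1 : ‖zb * ζ‖ = 1 := by rw [eq_neg_of_add_eq_zero_right h]; simp
    rw [norm_mul, hzbn] at h1
    have h2 : ‖ζ‖ < 1 := by simpa using hζ
    nlinarith [norm_nonneg z, norm_nonneg ζ]
  have hmap : ∀ ζ ∈ Metric.ball (0 : ℂ) 1, φ ζ ∈ Metric.ball (0 : ℂ) 1 := by
    intro ζ hζ
    have h2 : ‖ζ‖ < 1 := by simpa using hζ
    rw [mem_ball_zero_iff, hφ]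
    simp only
    rw [norm_div, div_lt_one (norm_pos_iff.2 (hne ζ hζ)), ← sq_lt_sq₀ (norm_nonneg _) (norm_nonneg _)]
    have h3 : ‖1 + zb * ζ‖ ^ 2 - ‖ζ + z‖ ^ 2 = (1 - ‖z‖ ^ 2) * (1 - ‖ζ‖ ^ 2) := by
      simp only [← Complex.normSq_eq_norm_sq, Complex.normSq_apply, hzb]
      simp
      ring
    have : 0 < (1 - ‖z‖ ^ 2) * (1 - ‖ζ‖ ^ 2) :=
      mul_pos hpos (by nlinarith [norm_nonneg ζ])
    linarith
  have hφd : ∀ ζ ∈ Metric.ball (0 : ℂ) 1,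
      HasDerivAt φ ((1 - ‖z‖ ^ 2 : ℝ) / (1 + zb * ζ) ^ 2) ζ := by
    intro ζ hζ
    refine (((hasDerivAt_id ζ).add_const z).div (((hasDerivAt_id ζ).const_mul zb).const_add 1)
      (hne ζ hζ)).congr_deriv ?_
    congr 1
    push_cast at hzz ⊢
    simp only [id]
    rw [← hzz]; ring
  have hFd : ∀ ζ ∈ Metric.ball (0 : ℂ) 1, HasDerivAt (fun ζ => f (φ ζ))
      (deriv f (φ ζ) * ((1 - ‖z‖ ^ 2 : ℝ) / (1 + zb * ζ) ^ 2)) ζ := by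
    intro ζ hζ
    exact (hf.differentiableAt (Metric.isOpen_ball.mem_nhds (hmap ζ hζ))).hasDerivAt.comp ζ
      (hφd ζ hζ)
  have hφinj : InjOn φ (Metric.ball 0 1) := by
    intro x hx y hy hxy
    simp only [hφ] at hxy
    rw [div_eq_div_iff (hne x hx) (hne y hy)] at hxy
    have h1 : (x - y) * ((1 - ‖z‖ ^ 2 : ℝ) : ℂ) = 0 := by
      push_cast at hzz ⊢
      rw [← hzz]
      linear_combination hxy
    rcases mul_eq_zero.1 h1 with h | h
    · exact sub_eq_zero.1 h
    · exact absurd (Complex.ofReal_eq_zero.1 h) hpos.ne'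
  have hm0 : (0 : ℂ) ∈ Metric.ball (0 : ℂ) 1 := Metric.mem_ball_self one_pos
  have hb0 : Metric.ball (0 : ℂ) 1 ∈ 𝓝 0 := Metric.ball_mem_nhds 0 one_pos
  have hφ0 : φ 0 = z := by simp [hφ]
  have hB := norm_second_deriv_zero_le (f := fun ζ => f (φ ζ))
    (fun ζ hζ => (hFd ζ hζ).differentiableAt.differentiableWithinAt)
    (hinj.comp hφinj hmap)
  have h1 : deriv (fun ζ => f (φ ζ)) 0 = deriv f z * ((1 - ‖z‖ ^ 2 : ℝ) : ℂ) := by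
    rw [(hFd 0 hm0).deriv, hφ0]; simp
  have h2 : deriv (deriv (fun ζ => f (φ ζ))) 0 = ((1 - ‖z‖ ^ 2 : ℝ) : ℂ) *
      (deriv (deriv f) z * ((1 - ‖z‖ ^ 2 : ℝ) : ℂ) - 2 * zb * deriv f z) := by
    have hev : deriv (fun ζ => f (φ ζ)) =ᶠ[𝓝 0] fun ζ =>
        deriv f (φ ζ) * ((1 - ‖z‖ ^ 2 : ℝ) / (1 + zb * ζ) ^ 2) := by
      filter_upwards [hb0] with ζ hζ using (hFd ζ hζ).deriv
    rw [hev.deriv_eq]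
    have hzB : z ∈ Metric.ball (0 : ℂ) 1 := by simpa using hz
    have g1 : HasDerivAt (fun ζ => deriv f (φ ζ)) (deriv (deriv f) (φ 0) *
        ((1 - ‖z‖ ^ 2 : ℝ) / (1 + zb * 0) ^ 2)) 0 := by
      refine HasDerivAt.comp (h₂ := deriv f) 0 ?_ (hφd 0 hm0)
      rw [hφ0]
      exact ((hf.deriv Metric.isOpen_ball).differentiableAt
        (Metric.isOpen_ball.mem_nhds hzB)).hasDerivAt
    have g2 := (hasDerivAt_const (0 : ℂ) ((1 - ‖z‖ ^ 2 : ℝ) : ℂ)).div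
      ((((hasDerivAt_id (0 : ℂ)).const_mul zb).const_add 1).pow 2)
      (pow_ne_zero 2 (hne 0 hm0))
    refine ((g1.mul g2).congr_deriv ?_).deriv
    rw [hφ0]
    simp
    ring
  rw [h1, h2, norm_mul, norm_mul, Complex.norm_real, Real.norm_eq_abs, abs_of_pos hpos] at hB
  have h3 := norm_sub_norm_le (deriv (deriv f) z * ((1 - ‖z‖ ^ 2 : ℝ) : ℂ)) (2 * zb * deriv f z)
  rw [norm_mul, norm_mul, norm_mul, hzbn, Complex.norm_real, Real.norm_eq_abs,
    abs_of_pos hpos, Complex.norm_ofNat] at h3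
  have h4 : ‖deriv (deriv f) z * ((1 - ‖z‖ ^ 2 : ℝ) : ℂ) - 2 * zb * deriv f z‖
      ≤ 4 * ‖deriv f z‖ := by
    refine le_of_mul_le_mul_left (hB.trans_eq (by ring)) hpos
  nlinarith

/-- The upper bound of the Koebe distortion theorem along the radius in direction `u`:
`‖f'(t u)‖ * (1 - t)³ / (1 + t)` is nonincreasing in `t`. -/
theorem norm_deriv_le_distortion {f : ℂ → ℂ} (hf : DifferentiableOn ℂ f (Metric.ball 0 1))
    (hinj : InjOn f (Metric.ball 0 1)) {u : ℂ} (hu : ‖u‖ = 1) {t : ℝ} (ht : 0 ≤ t) (ht1 : t < 1) :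
    ‖deriv f (t * u)‖ ≤ ‖deriv f 0‖ * ((1 + t) / (1 - t) ^ 3) := by
  set g : ℝ → ℂ := fun x => deriv f (x * u) with hg
  set w : ℝ → ℝ := fun x => (1 - x) ^ 3 / (1 + x) with hw
  have hnorm : ∀ x : ℝ, 0 ≤ x → ‖(x : ℂ) * u‖ = x := fun x hx => by
    rw [norm_mul, hu, mul_one, Complex.norm_real, Real.norm_of_nonneg hx]
  have hgd : ∀ x ∈ Ico (0 : ℝ) 1, HasDerivAt g (deriv (deriv f) (x * u) * u) x := by
    intro x hx
    have hxB : (x : ℂ) * u ∈ Metric.ball (0 : ℂ) 1 := by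
      rw [mem_ball_zero_iff, hnorm x hx.1]; exact hx.2
    have h1 := ((hf.deriv Metric.isOpen_ball).differentiableAt
        (Metric.isOpen_ball.mem_nhds hxB)).hasDerivAt
    have h2 : HasDerivAt (fun y : ℝ => (y : ℂ) * u) u x := by
      simpa using (Complex.ofRealCLM.hasDerivAt (x := x)).mul_const u
    exact h1.comp x h2
  have hwd : ∀ x ∈ Ico (0 : ℝ) 1, HasDerivAt w (-(w x * ((4 + 2 * x) / (1 - x ^ 2)))) x := by
    intro x hx
    have h1 : 1 + x ≠ 0 := by linarith [hx.1]
    have h2 : 1 - x ≠ 0 := by linarith [hx.2]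
    have h3 : 1 - x ^ 2 ≠ 0 := by
      rw [show 1 - x ^ 2 = (1 - x) * (1 + x) by ring]; exact mul_ne_zero h2 h1
    refine ((((hasDerivAt_id x).const_sub 1).pow 3).div ((hasDerivAt_id x).const_add 1)
      h1).congr_deriv ?_
    simp only [hw, id, Pi.pow_apply]
    field_simp
    push_cast
    ring
  have hNd : ∀ x ∈ Ico (0 : ℝ) 1, HasDerivAt (fun x => ‖g x‖ ^ 2 * w x ^ 2)
      (2 * inner ℝ (g x) (deriv (deriv f) (x * u) * u) * w x ^ 2 +
        ‖g x‖ ^ 2 * (2 * w x * -(w x * ((4 + 2 * x) / (1 - x ^ 2))))) x := by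
    intro x hx
    refine ((hgd x hx).norm_sq.mul ((hwd x hx).pow 2)).congr_deriv ?_
    simp
  -- The factor `w` solves `w' = -w (4 + 2x) / (1 - x²)`, matching the bound on `‖f''‖ / ‖f'‖`.
  have hanti : AntitoneOn (fun x => ‖g x‖ ^ 2 * w x ^ 2) (Ico 0 1) := by
    refine antitoneOn_of_deriv_nonpos (convex_Ico 0 1)
      (fun x hx => (hNd x hx).continuousAt.continuousWithinAt)
      (fun x hx => (hNd x (interior_subset hx)).differentiableAt.differentiableWithinAt) ?_
    intro x hx
    have hx := interior_subset hx
    rw [(hNd x hx).deriv]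
    have h0 : 0 < 1 - x ^ 2 := by nlinarith [hx.1, hx.2]
    have h1 := real_inner_le_norm (g x) (deriv (deriv f) (x * u) * u)
    rw [norm_mul, hu, mul_one] at h1
    have h2 := norm_second_deriv_le hf hinj (z := x * u) (by rw [hnorm x hx.1]; exact hx.2)
    rw [hnorm x hx.1, ← le_div_iff₀ h0, mul_div_assoc] at h2
    have h3 : inner ℝ (g x) (deriv (deriv f) (x * u) * u) ≤
        ‖g x‖ * (‖g x‖ * ((4 + 2 * x) / (1 - x ^ 2))) :=
      h1.trans (mul_le_mul_of_nonneg_left h2 (norm_nonneg _))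
    have h4 := mul_le_mul_of_nonneg_right h3 (sq_nonneg (w x))
    linarith
  have h := hanti (left_mem_Ico.2 one_pos) ⟨ht, ht1⟩ ht
  simp only [← mul_pow] at h
  have hwt : 0 < w t := by
    have : 0 < 1 - t := by linarith
    simp only [hw]; positivity
  have h5 := (sq_le_sq₀ (by positivity) (by simp [hw])).1 h
  have hg0 : ‖g 0‖ * w 0 = ‖deriv f 0‖ := by simp [hg, hw]
  rw [hg0, ← le_div_iff₀ hwt] at h5
  refine h5.trans_eq ?_
  simp only [hw]
  rw [div_div_eq_mul_div, mul_div_assoc]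

theorem stmt_3 (f : ℂ → ℂ)
    (hf : DifferentiableOn ℂ f (Metric.ball 0 1))
    (hinj : Set.InjOn f (Metric.ball 0 1))
    (h0 : f 0 = 0) (hderiv : ‖deriv f 0‖ ≤ 4) :
    ∀ ζ ∈ Metric.ball (0 : ℂ) 1, ‖f ζ‖ ≤ 4 * ‖ζ‖ / (1 - ‖ζ‖) ^ 2 := by
  intro ζ hζ
  rcases eq_or_ne ζ 0 with rfl | hζ0
  · simp [h0]
  have hζ1 : ‖ζ‖ < 1 := by simpa using hζ
  have hn : (‖ζ‖ : ℂ) ≠ 0 := by simpa using hζ0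
  set u : ℂ := ζ / ‖ζ‖ with hu
  have hu1 : ‖u‖ = 1 := by simp [hu, hζ0]
  have hζu : (‖ζ‖ : ℂ) * u = ζ := by rw [hu]; field_simp
  have hB : ∀ x ∈ Icc 0 ‖ζ‖, HasDerivAt (fun x : ℝ => 4 * x / (1 - x) ^ 2)
      (4 * ((1 + x) / (1 - x) ^ 3)) x := by
    intro x hx
    have h2 : 1 - x ≠ 0 := by linarith [hx.2]
    refine (((hasDerivAt_id x).const_mul 4).div (((hasDerivAt_id x).const_sub 1).pow 2)
      (pow_ne_zero 2 h2)).congr_deriv ?_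
    simp only [id, Pi.pow_apply]
    field_simp
    push_cast
    ring
  have hF : ∀ x ∈ Icc 0 ‖ζ‖, HasDerivAt (fun x : ℝ => f (x * u)) (deriv f (x * u) * u) x := by
    intro x hx
    have hxB : (x : ℂ) * u ∈ Metric.ball (0 : ℂ) 1 := by
      rw [mem_ball_zero_iff, norm_mul, hu1, mul_one, Complex.norm_real, Real.norm_of_nonneg hx.1]
      exact hx.2.trans_lt hζ1
    have h1 := (hf.differentiableAt (Metric.isOpen_ball.mem_nhds hxB)).hasDerivAt
    have h2 : HasDerivAt (fun y : ℝ => (y : ℂ) * u) u x := by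
      simpa using (Complex.ofRealCLM.hasDerivAt (x := x)).mul_const u
    exact h1.comp x h2
  have := image_norm_le_of_norm_deriv_right_le_deriv_boundary'
    (f := fun x : ℝ => f (x * u)) (a := 0) (b := ‖ζ‖)
    (fun x hx => (hF x hx).continuousAt.continuousWithinAt)
    (fun x hx => (hF x (Ico_subset_Icc_self hx)).hasDerivWithinAt)
    (B := fun x : ℝ => 4 * x / (1 - x) ^ 2) (by simp [h0])
    (fun x hx => (hB x hx).continuousAt.continuousWithinAt)
    (fun x hx => (hB x (Ico_subset_Icc_self hx)).hasDerivWithinAt)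
    (fun x hx => by
      have hx1 : 0 < 1 - x := by linarith [hx.2]
      rw [norm_mul, hu1, mul_one]
      refine (norm_deriv_le_distortion hf hinj hu1 hx.1 (hx.2.trans hζ1)).trans ?_
      have : 0 ≤ (1 + x) / (1 - x) ^ 3 := by
        have := hx.1
        positivity
      gcongr)
    (right_mem_Icc.2 (norm_nonneg ζ))
  simpa only [hζu] using this
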